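/- Let H be a nontrivial proper normal subgroup of G with [G : H] > 2 and |H| > 2. Then the set of numbers of common neighbours over all pairs of distinct non-adjacent vertices of Γ_H(G) equals {0, 2, 6, |G| - |H|}. -/

import Mathlib

/-!
Right translation reduces the count to the single parameter `(a, b) = u v⁻¹`: the common neighbours
of `u` and `v` correspond to the `t ∈ S` with `(a, b) t ∈ S`.

Consider the three lines `b = 1`, `a = 1`, `a = b` in `G × G`. If `(a, b) ≠ 1` lies on one of them but
outside `S`, then its nontrivial coordinates lie in `H`, and the valid `t` are exactly the points of
`S` on the same line: there are `|G| - |H|` of them. If `(a, b)` is on no line, then `t` and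
`(a, b) t` lie on two different lines, and each of the six ordered pairs of lines determines `t`.
Writing `A : a ∉ H`, `B : b ∉ H`, `C : a⁻¹ b ∉ H`, the six candidates are valid in pairs, under
`A ∧ B`, `B ∧ C` and `A ∧ C` respectively; normality of `H` makes the conditions on `a⁻¹ b` and
`b a⁻¹` agree. As `H` is a subgroup, it cannot happen that exactly one of `A, B, C` holds, so the
count is `0`, `2` or `6`. The assumption `|H| > 2` provides a pair with none of them, and
`[G : H] > 2` a pair with all three.
-/

open Pointwise

variable {G : Type*}

/-- The connection set `S = {(g,e),(e,g),(g,g) : g ∈ G \ H}` (as a predicate). -/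
def inS [Group G] (H : Subgroup G) (p : G × G) : Prop :=
  (p.1 ∉ H ∧ p.2 = 1) ∨ (p.1 = 1 ∧ p.2 ∉ H) ∨ (p.1 = p.2 ∧ p.1 ∉ H)

/-- Adjacency in the Cayley graph `Γ_H(G)` on `G × G`: distinct vertices
`(g₁,g₂)`, `(g₃,g₄)` are adjacent iff `(g₁g₃⁻¹, g₂g₄⁻¹) ∈ S`. -/
def gAdj [Group G] (H : Subgroup G) (u v : G × G) : Prop :=
  u ≠ v ∧ inS H (u.1 * v.1⁻¹, u.2 * v.2⁻¹)

/-- The set of common neighbours of `u` and `v` in `Γ_H(G)`. -/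
def commonNbrs [Group G] (H : Subgroup G) (u v : G × G) : Set (G × G) :=
  {w | gAdj H u w ∧ gAdj H v w}

/-- The `c`-set of `Γ_H(G)`: the set of all numbers of common neighbours of
pairs of distinct non-adjacent vertices. -/
def cSet [Group G] (H : Subgroup G) : Set ℕ :=
  {n | ∃ u v : G × G, u ≠ v ∧ ¬ gAdj H u v ∧ n = (commonNbrs H u v).ncard}

/-- The elements `t` of the connection set such that `(a, b) * t` is again in the connection set. -/
def shiftSet [Group G] (H : Subgroup G) (a b : G) : Set (G × G) :=
  {t | inS H t ∧ inS H (a * t.1, b * t.2)}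

lemma not_inS_one [Group G] (H : Subgroup G) : ¬ inS H (1, 1) := by
  simp [inS, H.one_mem]

lemma gAdj_iff [Group G] (H : Subgroup G) (u v : G × G) :
    gAdj H u v ↔ inS H (u.1 * v.1⁻¹, u.2 * v.2⁻¹) := by
  refine ⟨fun h => h.2, fun h => ⟨?_, h⟩⟩
  rintro rfl
  exact not_inS_one H (by simpa using h)

lemma ncard_commonNbrs [Group G] (H : Subgroup G) (u v : G × G) :
    (commonNbrs H u v).ncard = (shiftSet H (u.1 * v.1⁻¹) (u.2 * v.2⁻¹)).ncard := by
  have : commonNbrs H u v =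
      (fun t : G × G => t⁻¹ * v) '' shiftSet H (u.1 * v.1⁻¹) (u.2 * v.2⁻¹) := by
    ext w
    simp only [commonNbrs, shiftSet, gAdj_iff, Set.mem_ofPred_eq, Set.mem_image]
    constructor
    · rintro ⟨hu, hv⟩
      refine ⟨v * w⁻¹, ⟨hv, ?_⟩, by simp⟩
      simpa [mul_assoc] using hu
    · rintro ⟨t, ⟨ht, ht'⟩, rfl⟩
      exact ⟨by simpa [mul_assoc] using ht', by simpa [mul_assoc] using ht⟩
  rw [this]
  exact Set.ncard_image_of_injective _ fun s t h => by simpa using h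

/-- The `c`-set in terms of the single parameter `(a, b) = u v⁻¹`. -/
lemma mem_cSet [Group G] (H : Subgroup G) (n : ℕ) :
    n ∈ cSet H ↔ ∃ a b : G, ¬ (a = 1 ∧ b = 1) ∧ ¬ inS H (a, b) ∧ n = (shiftSet H a b).ncard := by
  constructor
  · rintro ⟨u, v, huv, hadj, rfl⟩
    refine ⟨u.1 * v.1⁻¹, u.2 * v.2⁻¹, ?_, by rwa [gAdj_iff] at hadj, ncard_commonNbrs H u v⟩
    rintro ⟨h1, h2⟩
    exact huv (Prod.ext (mul_inv_eq_one.1 h1) (mul_inv_eq_one.1 h2))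
  · rintro ⟨a, b, hab, hS, rfl⟩
    refine ⟨(a, b), 1, ?_, ?_, ?_⟩
    · simpa [Prod.ext_iff] using hab
    · simpa [gAdj_iff] using hS
    · simp [ncard_commonNbrs]

lemma ncard_compl_subgroup [Group G] [Fintype G] (H : Subgroup G) :
    ((H : Set G)ᶜ).ncard = Nat.card G - Nat.card H := by
  rw [Set.ncard_compl]
  rfl

lemma ncard_shiftSet_right [Group G] [Fintype G] (H : Subgroup G) {a : G} (ha : a ∈ H)
    (ha1 : a ≠ 1) : (shiftSet H a 1).ncard = Nat.card G - Nat.card H := by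
  have : shiftSet H a 1 = (fun x => (x, 1)) '' (H : Set G)ᶜ := by
    ext ⟨x, y⟩
    have h1 := H.one_mem
    have hx : a * x ∈ H ↔ x ∈ H := H.mul_mem_cancel_left ha
    simp only [shiftSet, inS, Set.mem_ofPred_eq, Set.mem_image, Set.mem_compl_iff, SetLike.mem_coe,
      Prod.mk.injEq, hx, one_mul]
    constructor
    · rintro ⟨⟨h, rfl⟩ | ⟨rfl, h⟩ | ⟨rfl, h⟩, h'⟩ <;> grind [mul_eq_right]
    · rintro ⟨z, h, rfl, rfl⟩
      exact ⟨.inl ⟨h, rfl⟩, .inl ⟨h, rfl⟩⟩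
  rw [this, Set.ncard_image_of_injective _ fun s t h => by simpa using h, ncard_compl_subgroup]

lemma ncard_shiftSet_left [Group G] [Fintype G] (H : Subgroup G) {b : G} (hb : b ∈ H)
    (hb1 : b ≠ 1) : (shiftSet H 1 b).ncard = Nat.card G - Nat.card H := by
  have : shiftSet H 1 b = (fun x => (1, x)) '' (H : Set G)ᶜ := by
    ext ⟨x, y⟩
    have h1 := H.one_mem
    have hy : b * y ∈ H ↔ y ∈ H := H.mul_mem_cancel_left hb
    simp only [shiftSet, inS, Set.mem_ofPred_eq, Set.mem_image, Set.mem_compl_iff, SetLike.mem_coe,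
      Prod.mk.injEq, hy, one_mul]
    constructor
    · rintro ⟨⟨h, rfl⟩ | ⟨rfl, h⟩ | ⟨rfl, h⟩, h'⟩ <;> grind [mul_eq_right]
    · rintro ⟨z, h, rfl, rfl⟩
      exact ⟨.inr (.inl ⟨rfl, h⟩), .inr (.inl ⟨rfl, h⟩)⟩
  rw [this, Set.ncard_image_of_injective _ fun s t h => by simpa using h, ncard_compl_subgroup]

lemma ncard_shiftSet_diag [Group G] [Fintype G] (H : Subgroup G) {a : G} (ha : a ∈ H)
    (ha1 : a ≠ 1) : (shiftSet H a a).ncard = Nat.card G - Nat.card H := by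
  have : shiftSet H a a = (fun x => (x, x)) '' (H : Set G)ᶜ := by
    ext ⟨x, y⟩
    have h1 := H.one_mem
    have hx : ∀ x, a * x ∈ H ↔ x ∈ H := fun x => H.mul_mem_cancel_left ha
    simp only [shiftSet, inS, Set.mem_ofPred_eq, Set.mem_image, Set.mem_compl_iff, SetLike.mem_coe,
      Prod.mk.injEq, hx]
    constructor
    · rintro ⟨⟨h, rfl⟩ | ⟨rfl, h⟩ | ⟨rfl, h⟩, h'⟩ <;> grind [mul_eq_right]
    · rintro ⟨z, h, rfl, rfl⟩
      exact ⟨.inr (.inr ⟨rfl, h⟩), .inr (.inr ⟨rfl, h⟩)⟩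
  rw [this, Set.ncard_image_of_injective _ fun s t h => by simpa using h, ncard_compl_subgroup]

/-- Off the three lines, each ordered pair of distinct lines contributes at most one element; the
six candidates are grouped by the condition under which they are valid. -/
lemma mem_shiftSet [Group G] (H : Subgroup G) (hn : H.Normal) {a b : G} (ha : a ≠ 1) (hb : b ≠ 1)
    (hab : a ≠ b) (t : G × G) :
    t ∈ shiftSet H a b ↔
      ((a ∉ H ∧ b ∉ H) ∧ (t = (a⁻¹, 1) ∨ t = (1, b⁻¹))) ∨
      ((b ∉ H ∧ a⁻¹ * b ∉ H) ∧ (t = (a⁻¹ * b, 1) ∨ t = (b⁻¹, b⁻¹))) ∨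
      ((a ∉ H ∧ a⁻¹ * b ∉ H) ∧ (t = (1, b⁻¹ * a) ∨ t = (a⁻¹, a⁻¹))) := by
  obtain ⟨x, y⟩ := t
  have e1 : b⁻¹ * a ∈ H ↔ a⁻¹ * b ∈ H := by
    rw [← H.inv_mem_iff]; simp
  have e2 : b * a⁻¹ ∈ H ↔ a⁻¹ * b ∈ H := hn.mem_comm_iff
  have e3 : a * b⁻¹ ∈ H ↔ a⁻¹ * b ∈ H := by
    rw [hn.mem_comm_iff, e1]
  simp only [shiftSet, inS, Set.mem_ofPred_eq, Prod.mk.injEq]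
  constructor
  · rintro ⟨⟨h, rfl⟩ | ⟨rfl, h⟩ | ⟨rfl, h⟩, ⟨h1, h2⟩ | ⟨h1, h2⟩ | ⟨h1, h2⟩⟩
    · simp_all
    · obtain rfl := eq_inv_of_mul_eq_one_right h1
      simp_all
    · obtain rfl := eq_inv_mul_of_mul_eq h1
      simp_all
    · obtain rfl := eq_inv_of_mul_eq_one_right h2
      simp_all
    · simp_all
    · rw [mul_one] at h1 h2
      obtain rfl := eq_inv_mul_of_mul_eq h1.symm
      exact .inr (.inr ⟨⟨h2, fun hc => h (e1.2 hc)⟩, .inl ⟨rfl, rfl⟩⟩)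
    · obtain rfl := eq_inv_of_mul_eq_one_right h2
      simp_all
    · obtain rfl := eq_inv_of_mul_eq_one_right h1
      simp_all
    · exact absurd (mul_right_cancel h1) hab
  · rintro (⟨⟨h, h'⟩, ⟨rfl, rfl⟩ | ⟨rfl, rfl⟩⟩ | ⟨⟨h, h'⟩, ⟨rfl, rfl⟩ | ⟨rfl, rfl⟩⟩ |
      ⟨⟨h, h'⟩, ⟨rfl, rfl⟩ | ⟨rfl, rfl⟩⟩) <;> simp_all

lemma ncard_shiftSet_zero [Group G] (H : Subgroup G) (hn : H.Normal) {a b : G} (ha : a ≠ 1)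
    (hb : b ≠ 1) (hab : a ≠ b) (hA : a ∈ H) (hB : b ∈ H) : (shiftSet H a b).ncard = 0 := by
  have : shiftSet H a b = ∅ := by
    ext t
    simp [mem_shiftSet H hn ha hb hab, hA, hB]
  simp [this]

lemma ncard_shiftSet_two_left [Group G] (H : Subgroup G) (hn : H.Normal) {a b : G} (ha : a ≠ 1)
    (hb : b ≠ 1) (hab : a ≠ b) (hA : a ∈ H) (hB : b ∉ H) : (shiftSet H a b).ncard = 2 := by
  have hC : a⁻¹ * b ∉ H := by rwa [H.mul_mem_cancel_left (H.inv_mem hA)]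
  have : shiftSet H a b = {(a⁻¹ * b, 1), (b⁻¹, b⁻¹)} := by
    ext t
    simp [mem_shiftSet H hn ha hb hab, hA, hB, hC]
  rw [this, Set.ncard_pair (by simp [Prod.ext_iff, eq_comm (a := (1 : G)), hb])]

lemma ncard_shiftSet_two_right [Group G] (H : Subgroup G) (hn : H.Normal) {a b : G} (ha : a ≠ 1)
    (hb : b ≠ 1) (hab : a ≠ b) (hA : a ∉ H) (hB : b ∈ H) : (shiftSet H a b).ncard = 2 := by
  have hC : a⁻¹ * b ∉ H := by rwa [H.mul_mem_cancel_right hB, H.inv_mem_iff]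
  have : shiftSet H a b = {(1, b⁻¹ * a), (a⁻¹, a⁻¹)} := by
    ext t
    simp [mem_shiftSet H hn ha hb hab, hA, hB, hC]
  rw [this, Set.ncard_pair (by simp [ha])]

lemma ncard_shiftSet_two_diag [Group G] (H : Subgroup G) (hn : H.Normal) {a b : G} (ha : a ≠ 1)
    (hb : b ≠ 1) (hab : a ≠ b) (hA : a ∉ H) (hB : b ∉ H) (hC : a⁻¹ * b ∈ H) :
    (shiftSet H a b).ncard = 2 := by
  have : shiftSet H a b = {(a⁻¹, 1), (1, b⁻¹)} := by
    ext t
    simp [mem_shiftSet H hn ha hb hab, hA, hB, hC]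
  rw [this, Set.ncard_pair (by simp [ha])]

lemma ncard_shiftSet_six [Group G] (H : Subgroup G) (hn : H.Normal) {a b : G} (ha : a ≠ 1)
    (hb : b ≠ 1) (hab : a ≠ b) (hA : a ∉ H) (hB : b ∉ H) (hC : a⁻¹ * b ∉ H) :
    (shiftSet H a b).ncard = 6 := by
  classical
  have : shiftSet H a b = (({(a⁻¹, 1), (1, b⁻¹), (a⁻¹ * b, 1), (b⁻¹, b⁻¹), (1, b⁻¹ * a),
      (a⁻¹, a⁻¹)} : Finset (G × G)) : Set (G × G)) := by
    ext t
    simp [mem_shiftSet H hn ha hb hab, hA, hB, hC, or_assoc]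
  have h1 : a⁻¹ * b ≠ 1 := fun h => hab (inv_mul_eq_one.1 h)
  rw [this, Set.ncard_coe_finset]
  have hba := hab.symm
  repeat rw [Finset.card_insert_of_notMem
    (by simp [*, eq_comm, mul_eq_one_iff_eq_inv])]
  simp

/-- If `H` is a nontrivial proper normal subgroup of `G` with `[G:H] > 2` and `|H| > 2`,
then the `c`-set of `Γ_H(G)` equals `{0, 2, 6, |G| - |H|}`. -/
theorem stmt_8 [Group G] [Fintype G] (hG : 5 ≤ Nat.card G) (H : Subgroup G)
    (hbot : H ≠ ⊥) (htop : H ≠ ⊤) (hnorm : H.Normal) (hidx : 2 < H.index)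
    (hcard : 2 < Nat.card H) :
    cSet H = {0, 2, 6, Nat.card G - Nat.card H} := by
  have h1 := H.one_mem
  -- `h ≠ k` are nontrivial elements of `H`; `a, b` lie in distinct nontrivial cosets.
  obtain ⟨h, k, hh, hk, hh1, hk1, hhk⟩ : ∃ h k : G, h ∈ H ∧ k ∈ H ∧ h ≠ 1 ∧ k ≠ 1 ∧ h ≠ k := by
    have hc : 2 < (H : Set G).ncard := hcard
    obtain ⟨h, hh, hh'⟩ := Set.exists_mem_notMem_of_ncard_lt_ncard
      (s := {1}) (t := (H : Set G)) (by rw [Set.ncard_singleton]; omega)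
    obtain ⟨k, hk, hk'⟩ := Set.exists_mem_notMem_of_ncard_lt_ncard
      (s := {1, h}) (t := (H : Set G)) ((Set.ncard_insert_le _ _).trans_lt
        (by rw [Set.ncard_singleton]; omega))
    simp only [Set.mem_insert_iff, Set.mem_singleton_iff, not_or] at hh' hk'
    exact ⟨h, k, hh, hk, hh', hk'.1, Ne.symm hk'.2⟩
  obtain ⟨a, b, ha, hb, hC⟩ : ∃ a b : G, a ∉ H ∧ b ∉ H ∧ a⁻¹ * b ∉ H := by
    obtain ⟨a, ha⟩ : ∃ a, a ∉ H := by
      by_contra! hall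
      exact htop (H.eq_top_iff'.2 hall)
    have hc : 2 < (Set.univ : Set (G ⧸ H)).ncard := by rwa [Set.ncard_univ]
    obtain ⟨q, -, hq⟩ := Set.exists_mem_notMem_of_ncard_lt_ncard
      (s := {((1 : G) : G ⧸ H), (a : G ⧸ H)}) (t := Set.univ) ((Set.ncard_insert_le _ _).trans_lt
        (by rw [Set.ncard_singleton]; omega))
    obtain ⟨b, rfl⟩ := QuotientGroup.mk_surjective q
    simp only [Set.mem_insert_iff, Set.mem_singleton_iff, not_or] at hq
    refine ⟨a, b, ha, fun hb => hq.1 ?_, fun hab => hq.2 ?_⟩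
    · exact (QuotientGroup.eq.2 (by simpa using hb)).symm
    · exact (QuotientGroup.eq.2 hab).symm
  have ne1 : ∀ {x : G}, x ∉ H → x ≠ 1 := fun hx e => hx (e ▸ h1)
  ext n
  simp only [mem_cSet, Set.mem_insert_iff, Set.mem_singleton_iff]
  constructor
  · rintro ⟨a, b, hne, hS, rfl⟩
    simp only [inS, not_or, not_and, not_not] at hS
    obtain ⟨hS1, hS2, hS3⟩ := hS
    by_cases hb1 : b = 1
    · subst hb1
      have ha1 : a ≠ 1 := fun e => hne ⟨e, rfl⟩
      have ha : a ∈ H := by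
        by_contra h
        exact hS1 h rfl
      exact .inr (.inr (.inr (ncard_shiftSet_right H ha ha1)))
    by_cases ha1 : a = 1
    · subst ha1
      exact .inr (.inr (.inr (ncard_shiftSet_left H (hS2 rfl) hb1)))
    by_cases hab : a = b
    · subst hab
      exact .inr (.inr (.inr (ncard_shiftSet_diag H (hS3 rfl) ha1)))
    by_cases hA : a ∈ H <;> by_cases hB : b ∈ H
    · exact .inl (ncard_shiftSet_zero H hnorm ha1 hb1 hab hA hB)
    · exact .inr (.inl (ncard_shiftSet_two_left H hnorm ha1 hb1 hab hA hB))
    · exact .inr (.inl (ncard_shiftSet_two_right H hnorm ha1 hb1 hab hA hB))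
    · by_cases hC : a⁻¹ * b ∈ H
      · exact .inr (.inl (ncard_shiftSet_two_diag H hnorm ha1 hb1 hab hA hB hC))
      · exact .inr (.inr (.inl (ncard_shiftSet_six H hnorm ha1 hb1 hab hA hB hC)))
  · have hab : a ≠ b := by
      rintro rfl
      exact hC (by simp)
    rintro (rfl | rfl | rfl | rfl)
    · exact ⟨h, k, by simp [hh1], by simp [inS, hh, hk, hh1, hk1],
        (ncard_shiftSet_zero H hnorm hh1 hk1 hhk hh hk).symm⟩
    · have hha : h ≠ a := fun e => ha (e ▸ hh)
      exact ⟨h, a, by simp [hh1], by simp [inS, hh, hh1],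
        (ncard_shiftSet_two_left H hnorm hh1 (ne1 ha) hha hh ha).symm⟩
    · exact ⟨a, b, by simp [ne1 ha], by simp [inS, ne1 ha, ne1 hb, hab],
        (ncard_shiftSet_six H hnorm (ne1 ha) (ne1 hb) hab ha hb hC).symm⟩
    · exact ⟨h, 1, by simp [hh1], by simp [inS, hh, hh1], (ncard_shiftSet_right H hh hh1).symm⟩
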